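/- (Uniform convergence of objectives, deterministic MFC.) Let 𝒳, 𝒰 be compact metric spaces, p continuous, r : 𝒫(𝒳) → ℝ continuous, γ ∈ (0,1), and Π an equi-Lipschitz class of policies with constant L_Π. With J^N(π) := E[ Σ_{t≥0} γ^t r(μ_t^N) ] the N-agent objective and J(Φ^{-1}(π)) := Σ_{t≥0} γ^t r(μ_t) the limiting MFC objective under the corresponding deterministic MFC policy, we have sup_{π ∈ Π} | J^N(π) − J(Φ^{-1}(π)) | → 0 as N → ∞. -/

import Mathlib

open MeasureTheory

/-- `W₁` distance on probability measures, via Kantorovich duality. -/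
noncomputable def W1 {X : Type*} [MeasurableSpace X] [PseudoMetricSpace X]
    (μ ν : ProbabilityMeasure X) : ℝ :=
  ⨆ f : {f : X → ℝ // LipschitzWith 1 f},
    |∫ x, (f : X → ℝ) x ∂(μ : Measure X) - ∫ x, (f : X → ℝ) x ∂(ν : Measure X)|

/-- Empirical measure of `N` points (an arbitrary probability measure if `N = 0`). -/
noncomputable def emp {X : Type*} [MeasurableSpace X] [Nonempty X] (N : ℕ) (x : Fin N → X) :
    ProbabilityMeasure X := by
  classical
  exact if hN : N = 0 then ⟨Measure.dirac (Classical.arbitrary X), inferInstance⟩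
  else ⟨(N : ENNReal)⁻¹ • ∑ i : Fin N, Measure.dirac (x i), by
    constructor
    simp only [Measure.smul_apply, Measure.coe_finset_sum, Finset.sum_apply,
      Measure.dirac_apply' _ MeasurableSet.univ, smul_eq_mul]
    simp only [Set.indicator_univ, Pi.one_apply, Finset.sum_const, Finset.card_univ,
      Fintype.card_fin, nsmul_eq_mul, mul_one]
    exact ENNReal.inv_mul_cancel (by exact_mod_cast hN) (by simp)⟩

/-- Law of the `N`-agent deterministic-MFC system at each time: agents start i.i.d. `μ0`,
sample actions from the shared policy `π` given own state and the empirical mean field, and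
transition through the kernel `p`. -/
noncomputable def mfcLawN {X U : Type*} [MeasurableSpace X] [Nonempty X] [MeasurableSpace U]
    (p : X → U → ProbabilityMeasure X → ProbabilityMeasure X)
    (π : ℕ → X → ProbabilityMeasure X → ProbabilityMeasure U)
    (μ0 : ProbabilityMeasure X) (N : ℕ) : ℕ → Measure (Fin N → X)
  | 0 => Measure.pi fun _ => (μ0 : Measure X)
  | t + 1 => (mfcLawN p π μ0 N t).bind fun x =>
      Measure.pi fun i => ((π t (x i) (emp N x) : Measure U)).bind
        fun u => (p (x i) u (emp N x) : Measure X)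


namespace MFC

open Filter Topology ProbabilityTheory

lemma measurable_of_continuous {A B : Type*} [TopologicalSpace A] [MeasurableSpace A]
    [OpensMeasurableSpace A] [TopologicalSpace B] [MeasurableSpace B] [BorelSpace B]
    [HasOuterApproxClosed B] {κ : A → ProbabilityMeasure B} (hκ : Continuous κ) :
    Measurable (fun a => (κ a : Measure B)) := by
  refine Measurable.measure_of_isPiSystem_of_isProbabilityMeasure
    (BorelSpace.measurable_eq.trans borel_eq_generateFrom_isClosed) isPiSystem_isClosed ?_
  intro s hs
  have hs' : IsClosed s := hs
  refine measurable_of_tendsto_metrizable (f := fun n a => ∫⁻ b, hs'.apprSeq n b ∂(κ a : Measure B))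
    ?_ ?_
  · intro n
    exact ((ProbabilityMeasure.continuous_iff_forall_continuous_lintegral.1 hκ) _).measurable
  · rw [tendsto_pi_nhds]
    intro a
    exact HasOuterApproxClosed.tendsto_lintegral_apprSeq hs' _

lemma integrable_cont {A : Type*} [TopologicalSpace A] [CompactSpace A] [MeasurableSpace A]
    [OpensMeasurableSpace A] (m : Measure A) [IsFiniteMeasure m] {f : A → ℝ} (hf : Continuous f) :
    Integrable f m := by
  have := (BoundedContinuousFunction.mkOfCompact ⟨f, hf⟩).integrable m
  exact this

lemma integral_bind {A B : Type*} [TopologicalSpace A] [MeasurableSpace A]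
    [OpensMeasurableSpace A] [TopologicalSpace B] [CompactSpace B] [MeasurableSpace B] [BorelSpace B]
    [HasOuterApproxClosed B] (m : Measure A) [IsProbabilityMeasure m]
    {κ : A → ProbabilityMeasure B} (hκ : Continuous κ) {f : B → ℝ} (hf : Continuous f) :
    ∫ b, f b ∂(m.bind fun a => (κ a : Measure B)) = ∫ a, ∫ b, f b ∂(κ a : Measure B) ∂m := by
  have hm := measurable_of_continuous hκ
  let η : Kernel A B := ⟨fun a => (κ a : Measure B), hm⟩
  have : IsMarkovKernel η := ⟨fun a => by change IsProbabilityMeasure (κ a : Measure B); infer_instance⟩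
  have h := Kernel.integral_comp (κ := Kernel.const Unit m) (η := η) (a := ()) (f := f)
    (integrable_cont _ hf)
  rw [Kernel.comp_apply] at h
  exact h

lemma isProb_bind {A B : Type*} [TopologicalSpace A] [MeasurableSpace A]
    [OpensMeasurableSpace A] [TopologicalSpace B] [MeasurableSpace B] [BorelSpace B]
    [HasOuterApproxClosed B] (m : Measure A) [IsProbabilityMeasure m]
    {κ : A → ProbabilityMeasure B} (hκ : Continuous κ) :
    IsProbabilityMeasure (m.bind fun a => (κ a : Measure B)) :=
  isProbabilityMeasure_bind (measurable_of_continuous hκ).aemeasurable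
    (Eventually.of_forall fun _ => inferInstance)

/-- Generic modulus lemma. -/
lemma modulus {K : Type*} [TopologicalSpace K] [CompactSpace K] {h : K → ℝ} (hh : Continuous h)
    {ρ : K × K → ℝ} (hρ : Continuous ρ) (hρ0 : ∀ z, 0 ≤ ρ z)
    (hρe : ∀ z, ρ z = 0 → z.1 = z.2) {ε : ℝ} (hε : 0 < ε) :
    ∃ C > 0, ∀ z z', |h z - h z'| ≤ ε + C * ρ (z, z') := by
  let S : Set (K × K) := {z | ε ≤ |h z.1 - h z.2|}
  have hcont : Continuous fun z : K × K => |h z.1 - h z.2| := by fun_prop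
  have hS : IsCompact S := (isClosed_le continuous_const hcont).isCompact
  by_cases hne : S.Nonempty
  · obtain ⟨z0, hz0, hmin⟩ := hS.exists_isMinOn hne hρ.continuousOn
    obtain ⟨z1, hz1, hmax⟩ := hS.exists_isMaxOn hne hcont.continuousOn
    have hδ : 0 < ρ z0 := by
      refine lt_of_le_of_ne (hρ0 _) (fun h0 => ?_)
      have := hρe z0 h0.symm
      have h2 : ε ≤ |h z0.1 - h z0.2| := hz0
      rw [this, sub_self, abs_zero] at h2
      linarith
    have hM : 0 < |h z1.1 - h z1.2| := lt_of_lt_of_le hε hz1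
    refine ⟨|h z1.1 - h z1.2| / ρ z0, by positivity, fun z z' => ?_⟩
    by_cases hz : (z, z') ∈ S
    · have a1 : |h z - h z'| ≤ |h z1.1 - h z1.2| := hmax hz
      have a2 : ρ z0 ≤ ρ (z, z') := hmin hz
      have : |h z1.1 - h z1.2| ≤ |h z1.1 - h z1.2| / ρ z0 * ρ (z, z') := by
        rw [div_mul_eq_mul_div, le_div_iff₀ hδ]
        gcongr
      linarith
    · have : |h z - h z'| < ε := not_le.1 hz
      have := mul_nonneg (a := |h z1.1 - h z1.2| / ρ z0) (by positivity) (hρ0 (z, z'))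
      linarith
  · refine ⟨1, one_pos, fun z z' => ?_⟩
    have : |h z - h z'| < ε := by
      by_contra hc
      exact hne ⟨(z, z'), not_lt.1 hc⟩
    have := hρ0 (z, z')
    linarith

lemma affine_int {Y : Type*} [MetricSpace Y] [CompactSpace Y] [MeasurableSpace Y] [BorelSpace Y]
    (α β : ProbabilityMeasure Y) {w : ℝ}
    (hw : ∀ g : Y → ℝ, LipschitzWith 1 g →
      |∫ y, g y ∂(α : Measure Y) - ∫ y, g y ∂(β : Measure Y)| ≤ w)
    {h : Y → ℝ} (hc : Continuous h) {ε C : ℝ} (hC : 0 < C)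
    (hh : ∀ u v, |h u - h v| ≤ ε + C * dist u v) :
    |∫ y, h y ∂(α : Measure Y) - ∫ y, h y ∂(β : Measure Y)| ≤ 2 * ε + C * w := by
  have : Nonempty Y := α.nonempty
  let k : Y → ℝ := fun u => ⨅ v, (h v + C * dist u v)
  have hbdd : ∀ u, BddBelow (Set.range fun v => h v + C * dist u v) := by
    intro u
    refine ⟨h u - ε, ?_⟩
    rintro _ ⟨v, rfl⟩
    have := abs_le.1 (hh u v)
    simp only
    linarith
  have hk1 : ∀ u, k u ≤ h u := by
    intro u
    have := ciInf_le (hbdd u) u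
    simpa using this
  have hk2 : ∀ u, h u - ε ≤ k u := by
    intro u
    refine le_ciInf fun v => ?_
    have := abs_le.1 (hh u v)
    linarith
  have hkl : ∀ u u', k u ≤ k u' + C * dist u u' := by
    intro u u'
    rw [← sub_le_iff_le_add]
    refine le_ciInf fun v => ?_
    have h1 := ciInf_le (hbdd u) v
    have h2 := mul_le_mul_of_nonneg_left (dist_triangle u u' v) hC.le
    have h3 : k u ≤ h v + C * dist u v := h1
    linarith
  have hlip : LipschitzWith 1 (fun u => C⁻¹ * k u) := by
    refine LipschitzWith.of_le_add fun u u' => ?_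
    have := mul_le_mul_of_nonneg_left (hkl u u') (inv_nonneg.2 hC.le)
    rw [mul_add, ← mul_assoc C⁻¹ C, inv_mul_cancel₀ hC.ne', one_mul] at this
    exact this
  have hkc : Continuous k := by
    have : Continuous fun u => C * (C⁻¹ * k u) := continuous_const.mul hlip.continuous
    refine this.congr fun u => ?_
    rw [← mul_assoc, mul_inv_cancel₀ hC.ne', one_mul]
  have h1 := hw _ hlip
  rw [integral_const_mul, integral_const_mul, ← mul_sub, abs_mul, abs_of_pos (inv_pos.2 hC),
    inv_mul_le_iff₀ hC] at h1
  have comp : ∀ m : ProbabilityMeasure Y,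
      ∫ y, k y ∂(m : Measure Y) ≤ ∫ y, h y ∂(m : Measure Y) ∧
      ∫ y, h y ∂(m : Measure Y) ≤ ∫ y, k y ∂(m : Measure Y) + ε := by
    intro m
    have i1 := integrable_cont (m : Measure Y) hc
    have i2 := integrable_cont (m : Measure Y) hkc
    refine ⟨integral_mono i2 i1 hk1, ?_⟩
    have : ∫ y, (k y + ε) ∂(m : Measure Y) = ∫ y, k y ∂(m : Measure Y) + ε := by
      rw [integral_add i2 (integrable_const _)]; simp
    rw [← this]
    exact integral_mono i1 (i2.add (integrable_const _)) fun u => by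
      have := hk2 u
      linarith
  obtain ⟨a1, a2⟩ := comp α
  obtain ⟨b1, b2⟩ := comp β
  have hε : 0 ≤ ε := by
    have := hh (Classical.arbitrary Y) (Classical.arbitrary Y)
    simpa using this
  rw [abs_le] at h1 ⊢
  constructor <;> linarith [h1.1, h1.2]

section W
variable {X : Type*} [MetricSpace X] [CompactSpace X] [MeasurableSpace X] [BorelSpace X]

lemma lip_bdd (μ ν : ProbabilityMeasure X) {f : X → ℝ} (hf : LipschitzWith 1 f) :
    |∫ x, f x ∂(μ : Measure X) - ∫ x, f x ∂(ν : Measure X)| ≤ 2 * Metric.diam (Set.univ : Set X) := by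
  obtain ⟨x0⟩ := μ.nonempty
  have key : ∀ m : ProbabilityMeasure X,
      |∫ x, f x ∂(m : Measure X) - f x0| ≤ Metric.diam (Set.univ : Set X) := by
    intro m
    have : ∫ x, f x ∂(m : Measure X) - f x0 = ∫ x, (f x - f x0) ∂(m : Measure X) := by
      rw [integral_sub (integrable_cont _ hf.continuous) (integrable_const _)]; simp
    rw [this]
    have := norm_integral_le_of_norm_le_const (μ := (m : Measure X)) (f := fun x => f x - f x0)
      (C := Metric.diam (Set.univ : Set X)) (Eventually.of_forall fun x => by
        have h1 := hf.dist_le_mul x x0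
        rw [Real.dist_eq] at h1
        have h2 := Metric.dist_le_diam_of_mem (isCompact_univ (X := X)).isBounded
          (Set.mem_univ x) (Set.mem_univ x0)
        simp only [NNReal.coe_one, one_mul] at h1
        rw [Real.norm_eq_abs]
        linarith)
    simpa using this
  have h1 := abs_le.1 (key μ)
  have h2 := abs_le.1 (key ν)
  rw [abs_le]; constructor <;> linarith [h1.1, h1.2]

lemma W1_bddAbove (μ ν : ProbabilityMeasure X) :
    BddAbove (Set.range fun f : {f : X → ℝ // LipschitzWith 1 f} =>
    |∫ x, (f : X → ℝ) x ∂(μ : Measure X) - ∫ x, (f : X → ℝ) x ∂(ν : Measure X)|) := by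
  refine ⟨2 * Metric.diam (Set.univ : Set X), ?_⟩
  rintro _ ⟨f, rfl⟩
  exact lip_bdd μ ν f.2

lemma le_W1 (μ ν : ProbabilityMeasure X) (f : X → ℝ) (hf : LipschitzWith 1 f) :
    |∫ x, f x ∂(μ : Measure X) - ∫ x, f x ∂(ν : Measure X)| ≤ W1 μ ν :=
  le_ciSup (W1_bddAbove μ ν) ⟨f, hf⟩

instance : Nonempty {f : X → ℝ // LipschitzWith 1 f} :=
  ⟨⟨fun _ => 0, LipschitzWith.const' 0⟩⟩

lemma W1_le {μ ν : ProbabilityMeasure X} {w : ℝ}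
    (h : ∀ f : X → ℝ, LipschitzWith 1 f →
      |∫ x, f x ∂(μ : Measure X) - ∫ x, f x ∂(ν : Measure X)| ≤ w) : W1 μ ν ≤ w :=
  ciSup_le fun f => h f f.2

lemma W1_nonneg (μ ν : ProbabilityMeasure X) : 0 ≤ W1 μ ν :=
  le_trans (abs_nonneg _) (le_W1 μ ν (fun _ => 0) (LipschitzWith.const' 0))

lemma W1_self (μ : ProbabilityMeasure X) : W1 μ μ = 0 :=
  le_antisymm (W1_le fun f _ => by simp) (W1_nonneg _ _)

lemma W1_comm (μ ν : ProbabilityMeasure X) : W1 μ ν = W1 ν μ := by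
  unfold W1
  congr 1
  ext f
  exact abs_sub_comm _ _

lemma W1_triangle (μ ν ξ : ProbabilityMeasure X) : W1 μ ξ ≤ W1 μ ν + W1 ν ξ :=
  W1_le fun f hf => by
    have := abs_sub_le (∫ x, f x ∂(μ : Measure X)) (∫ x, f x ∂(ν : Measure X))
      (∫ x, f x ∂(ξ : Measure X))
    linarith [le_W1 μ ν f hf, le_W1 ν ξ f hf]

lemma W1_eq {μ ν : ProbabilityMeasure X} (h : W1 μ ν = 0) : μ = ν := by
  apply Subtype.ext
  change (μ : Measure X) = (ν : Measure X)
  refine ext_of_forall_integral_eq_of_IsFiniteMeasure fun f => ?_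
  rw [← sub_eq_zero, ← abs_eq_zero]
  refine le_antisymm (le_of_forall_pos_le_add fun ε hε => ?_) (abs_nonneg _)
  obtain ⟨C, hC, hh⟩ := modulus (K := X) f.continuous (ρ := fun z => dist z.1 z.2) (by fun_prop)
    (fun _ => dist_nonneg) (fun z hz => dist_eq_zero.1 hz) (half_pos hε)
  have := affine_int μ ν (fun g hg => le_W1 μ ν g hg) f.continuous hC hh
  rw [h] at this
  refine this.trans (by linarith)

lemma W1_bound [Nonempty X] {ε : ℝ} (hε : 0 < ε) : ∃ F : Finset (BoundedContinuousFunction X ℝ),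
    ∀ μ ν : ProbabilityMeasure X, W1 μ ν ≤ ε +
      ∑ g ∈ F, |∫ x, g x ∂(μ : Measure X) - ∫ x, g x ∂(ν : Measure X)| := by
  let x0 : X := Classical.arbitrary X
  let D := Metric.diam (Set.univ : Set X)
  let A : Set (BoundedContinuousFunction X ℝ) := {f | LipschitzWith 1 f ∧ f x0 = 0}
  have hA : IsCompact (closure A) := by
    refine BoundedContinuousFunction.arzela_ascoli (Set.Icc (-D) D) isCompact_Icc A ?_ ?_
    · rintro f x ⟨h1, h2⟩
      have h1 := h1.dist_le_mul x x0
      rw [h2, Real.dist_eq] at h1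
      have h2 := Metric.dist_le_diam_of_mem (isCompact_univ (X := X)).isBounded
          (Set.mem_univ x) (Set.mem_univ x0)
      simp only [NNReal.coe_one, one_mul, sub_zero] at h1
      exact abs_le.1 (h1.trans h2)
    · exact (LipschitzWith.uniformEquicontinuous _ 1 (fun f : A => f.2.1)).equicontinuous
  obtain ⟨T, hT, hcov⟩ := Metric.totallyBounded_iff.1
    (hA.totallyBounded.subset subset_closure) (ε / 2) (half_pos hε)
  refine ⟨hT.toFinset, fun μ ν => W1_le fun f hf => ?_⟩
  let f' : BoundedContinuousFunction X ℝ := BoundedContinuousFunction.mkOfCompact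
    ⟨fun x => f x - f x0, hf.continuous.sub continuous_const⟩
  have hf' : f' ∈ A := ⟨by
    refine LipschitzWith.of_dist_le_mul fun x y => ?_
    have := hf.dist_le_mul x y
    simpa [f'] using this, by simp [f']⟩
  obtain ⟨g, hg, hfg⟩ := Set.mem_iUnion₂.1 (hcov hf')
  have hle : ∀ m : ProbabilityMeasure X,
      |∫ x, f x ∂(m : Measure X) - f x0 - ∫ x, g x ∂(m : Measure X)| ≤ ε / 2 := by
    intro m
    have e : ∫ x, f x ∂(m : Measure X) - f x0 - ∫ x, g x ∂(m : Measure X)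
        = ∫ x, (f' x - g x) ∂(m : Measure X) := by
      rw [integral_sub (f'.integrable _) (g.integrable _)]
      congr 1
      simp only [f', BoundedContinuousFunction.mkOfCompact_apply, ContinuousMap.coe_mk]
      rw [integral_sub (integrable_cont _ hf.continuous) (integrable_const _)]; simp
    rw [e]
    have := norm_integral_le_of_norm_le_const (μ := (m : Measure X)) (f := fun x => f' x - g x)
      (C := ε / 2) (Eventually.of_forall fun x => by
        have h1 := BoundedContinuousFunction.dist_coe_le_dist (f := f') (g := g) x
        rw [Real.dist_eq] at h1
        exact h1.trans (Metric.mem_ball.1 hfg).le)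
    simpa using this
  have h1 := abs_le.1 (hle μ)
  have h2 := abs_le.1 (hle ν)
  have h3 := Finset.single_le_sum (f := fun g : BoundedContinuousFunction X ℝ =>
    |∫ x, g x ∂(μ : Measure X) - ∫ x, g x ∂(ν : Measure X)|) (fun _ _ => abs_nonneg _)
    (hT.mem_toFinset.2 hg)
  have h4 := neg_abs_le (∫ x, g x ∂(μ : Measure X) - ∫ x, g x ∂(ν : Measure X))
  have h5 := le_abs_self (∫ x, g x ∂(μ : Measure X) - ∫ x, g x ∂(ν : Measure X))
  rw [abs_le]; constructor <;> linarith [h1.1, h1.2, h2.1, h2.2]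

lemma W1_tendsto [Nonempty X] (μ : ProbabilityMeasure X) :
    Tendsto (fun ν => W1 ν μ) (𝓝 μ) (𝓝 0) := by
  rw [Metric.tendsto_nhds]
  intro ε hε
  obtain ⟨F, hF⟩ := W1_bound (X := X) (half_pos hε)
  have hc : Continuous fun ν : ProbabilityMeasure X =>
      ∑ g ∈ F, |∫ x, g x ∂(ν : Measure X) - ∫ x, g x ∂(μ : Measure X)| := by
    refine continuous_finsetSum _ fun g _ => ?_
    exact ((ProbabilityMeasure.continuous_integral_boundedContinuousFunction g).sub
      continuous_const).abs
  have := hc.tendsto μ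
  simp only [sub_self, abs_zero, Finset.sum_const_zero] at this
  filter_upwards [this.eventually (gt_mem_nhds (half_pos hε))] with ν hν
  rw [Real.dist_eq, sub_zero, abs_of_nonneg (W1_nonneg _ _)]
  linarith [hF ν μ]

lemma W1_continuous [Nonempty X] :
    Continuous fun z : ProbabilityMeasure X × ProbabilityMeasure X => W1 z.1 z.2 := by
  rw [continuous_iff_continuousAt]
  rintro ⟨μ, ν⟩
  have h1 : Tendsto (fun z : ProbabilityMeasure X × ProbabilityMeasure X => W1 z.1 μ + W1 z.2 ν)
      (𝓝 (μ, ν)) (𝓝 0) := by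
    have a := (W1_tendsto μ).comp (continuous_fst.tendsto (μ, ν))
    have b := (W1_tendsto ν).comp (continuous_snd.tendsto (μ, ν))
    simpa using a.add b
  rw [ContinuousAt, tendsto_iff_dist_tendsto_zero]
  refine squeeze_zero (fun _ => dist_nonneg) (fun z => ?_) h1
  rw [Real.dist_eq, abs_le]
  have t1 := W1_triangle z.1 μ z.2
  have t2 := W1_triangle μ ν z.2
  have t3 := W1_triangle μ z.1 ν
  have t4 := W1_triangle z.1 z.2 ν
  rw [W1_comm ν z.2] at t2
  rw [W1_comm μ z.1] at t3
  constructor <;> simp only <;> linarith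

end W

end MFC

namespace MFC

open Filter Topology ProbabilityTheory

section L
variable {X : Type*} [MetricSpace X] [CompactSpace X] [MeasurableSpace X] [BorelSpace X]

lemma lln {N : ℕ} (hN : 0 < N) (κ : Fin N → ProbabilityMeasure X) {f : X → ℝ} (hf : Continuous f)
    {M : ℝ} (hM0 : 0 ≤ M) (hM : ∀ x, |f x| ≤ M) :
    ∫ y, |(N : ℝ)⁻¹ * ∑ i, f (y i) - (N : ℝ)⁻¹ * ∑ i, ∫ x, f x ∂(κ i : Measure X)|
      ∂(Measure.pi fun i => (κ i : Measure X)) ≤ M / √N := by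
  set P : Measure (Fin N → X) := Measure.pi fun i => (κ i : Measure X)
  set m : ℝ := ∑ i, ∫ x, f x ∂(κ i : Measure X) with hm
  have hNr : (0 : ℝ) < N := by exact_mod_cast hN
  have hfL : ∀ i, MemLp f 2 (κ i : Measure X) := fun i =>
    MemLp.of_bound hf.aestronglyMeasurable M (Eventually.of_forall hM)
  have hvar := variance_sum_pi (μ := fun i => (κ i : Measure X)) (X := fun _ => f) hfL
  have hvarle : ∀ i, Var[f; (κ i : Measure X)] ≤ M ^ 2 := by
    intro i
    refine (variance_le_expectation_sq hf.aestronglyMeasurable).trans ?_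
    have : ∫ x, (f ^ 2) x ∂(κ i : Measure X) ≤ ∫ x, M ^ 2 ∂(κ i : Measure X) := by
      refine integral_mono (integrable_cont _ (hf.pow 2)) (integrable_const _) fun x => ?_
      simp only [Pi.pow_apply]
      exact sq_le_sq' (abs_le.1 (hM x)).1 (abs_le.1 (hM x)).2
    simpa using this
  have hS : Continuous fun y : Fin N → X => ∑ i, f (y i) := by fun_prop
  have hES : ∫ y, ∑ i, f (y i) ∂P = m := by
    rw [integral_finsetSum]
    · refine Finset.sum_congr rfl fun i _ => ?_
      exact integral_comp_eval (μ := fun i => (κ i : Measure X)) (f := f) hf.aestronglyMeasurable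
    · intro i _
      exact integrable_cont P (f := fun y : Fin N → X => f (y i)) (by fun_prop)
  have hsq : ∫ y, (∑ i, f (y i) - m) ^ 2 ∂P ≤ N * M ^ 2 := by
    have e : (∑ i, fun ω : Fin N → X => f (ω i)) = fun y => ∑ i, f (y i) := by
      ext y; simp
    rw [e, variance_eq_integral hS.aemeasurable, hES] at hvar
    rw [hvar]
    calc _ ≤ ∑ i : Fin N, M ^ 2 := Finset.sum_le_sum fun i _ => hvarle i
      _ = _ := by simp
  have hA : Continuous fun y : Fin N → X => |∑ i, f (y i) - m| := by fun_prop
  have habs : (∫ y, |∑ i, f (y i) - m| ∂P) ^ 2 ≤ N * M ^ 2 := by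
    have h0 := variance_nonneg (fun y : Fin N → X => |∑ i, f (y i) - m|) P
    rw [variance_eq_sub] at h0
    · refine le_trans ?_ hsq
      have : ∫ y, ((fun y : Fin N → X => |∑ i, f (y i) - m|) ^ 2) y ∂P
        = ∫ y, (∑ i, f (y i) - m) ^ 2 ∂P := by simp [sq_abs]
      rw [this] at h0
      linarith
    · obtain ⟨B, hB⟩ := (isCompact_univ (X := Fin N → X)).exists_bound_of_continuousOn
        hA.continuousOn
      exact MemLp.of_bound hA.aestronglyMeasurable B (Eventually.of_forall fun y => hB y trivial)
  have h1 : ∫ y, |∑ i, f (y i) - m| ∂P ≤ √N * M := by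
    refine abs_le_of_sq_le_sq' ?_ (by positivity) |>.2
    rw [mul_pow, Real.sq_sqrt hNr.le]
    exact habs
  simp_rw [← mul_sub, abs_mul, integral_const_mul]
  rw [abs_of_pos (inv_pos.2 hNr), inv_mul_le_iff₀ hNr]
  refine h1.trans (le_of_eq ?_)
  have : √(N : ℝ) ≠ 0 := (Real.sqrt_pos.2 hNr).ne'
  rw [mul_div_assoc', eq_div_iff this, mul_right_comm, Real.mul_self_sqrt hNr.le]

lemma integral_emp [Nonempty X] {N : ℕ} (hN : 0 < N) (y : Fin N → X) {f : X → ℝ}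
    (hf : Continuous f) :
    ∫ x, f x ∂(emp N y : Measure X) = (N : ℝ)⁻¹ * ∑ i, f (y i) := by
  have : (emp N y : Measure X) = (N : ENNReal)⁻¹ • ∑ i : Fin N, Measure.dirac (y i) := by
    have h : emp N y = ⟨_, _⟩ := dif_neg hN.ne'
    rw [h]
    rfl
  rw [this, integral_smul_measure, integral_finsetSum_measure]
  · simp [integral_dirac]
  · intro i _
    exact integrable_cont _ hf

lemma emp_continuous [Nonempty X] (N : ℕ) : Continuous fun y : Fin N → X => emp N y := by
  rcases Nat.eq_zero_or_pos N with rfl | hN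
  · exact continuous_of_const fun x y => by rw [Subsingleton.elim x y]
  · rw [ProbabilityMeasure.continuous_iff_forall_continuous_integral]
    intro f
    simp_rw [integral_emp hN _ f.continuous]
    fun_prop

lemma lln_W [Nonempty X] {ε : ℝ} (hε : 0 < ε) : ∃ N0 : ℕ, 0 < N0 ∧ ∀ N ≥ N0,
    ∀ (κ : Fin N → ProbabilityMeasure X) (ν : ProbabilityMeasure X),
    (∀ f : X → ℝ, Continuous f →
      ∫ x, f x ∂(ν : Measure X) = (N : ℝ)⁻¹ * ∑ i, ∫ x, f x ∂(κ i : Measure X)) →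
    ∫ y, W1 (emp N y) ν ∂(Measure.pi fun i => (κ i : Measure X)) ≤ ε := by
  obtain ⟨F, hF⟩ := W1_bound (X := X) (half_pos hε)
  set B : ℝ := ∑ g ∈ F, ‖g‖ with hB
  have hlim : Tendsto (fun N : ℕ => B / √(N : ℝ)) atTop (𝓝 0) :=
    tendsto_const_nhds.div_atTop (Real.tendsto_sqrt_atTop.comp tendsto_natCast_atTop_atTop)
  obtain ⟨N0, hN0⟩ := eventually_atTop.1 (hlim.eventually (gt_mem_nhds (half_pos hε)))
  refine ⟨N0 + 1, Nat.succ_pos _, fun N hN κ ν hν => ?_⟩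
  have hNp : 0 < N := by omega
  have hb := hN0 N (by omega)
  have hcW : Continuous fun y : Fin N → X => W1 (emp N y) ν :=
    W1_continuous.comp ((emp_continuous N).prodMk continuous_const)
  have hcg : ∀ g : BoundedContinuousFunction X ℝ, Continuous fun y : Fin N → X =>
      |∫ x, g x ∂(emp N y : Measure X) - ∫ x, g x ∂(ν : Measure X)| := fun g =>
    (((ProbabilityMeasure.continuous_integral_boundedContinuousFunction g).comp
      (emp_continuous N)).sub continuous_const).abs
  calc _ ≤ ∫ y, (ε / 2 + ∑ g ∈ F, |∫ x, g x ∂(emp N y : Measure X) - ∫ x, g x ∂(ν : Measure X)|)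
        ∂(Measure.pi fun i => (κ i : Measure X)) :=
        integral_mono (integrable_cont _ hcW) (integrable_cont _
          (continuous_const.add (continuous_finsetSum _ fun g _ => hcg g))) fun y => hF _ _
    _ = ε / 2 + ∑ g ∈ F, ∫ y, |∫ x, g x ∂(emp N y : Measure X) - ∫ x, g x ∂(ν : Measure X)|
        ∂(Measure.pi fun i => (κ i : Measure X)) := by
        rw [integral_add (integrable_const _) (integrable_cont _
          (continuous_finsetSum _ fun g _ => hcg g)), integral_finsetSum _
            fun g _ => integrable_cont _ (hcg g)]
        simp
    _ ≤ ε / 2 + ∑ g ∈ F, ‖g‖ / √(N : ℝ) := by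
        gcongr with g _
        simp_rw [hν g g.continuous, integral_emp hNp _ g.continuous]
        exact lln hNp κ g.continuous (norm_nonneg _) (fun x => g.norm_coe_le_norm x)
    _ = ε / 2 + B / √(N : ℝ) := by rw [hB, Finset.sum_div]
    _ ≤ ε := by linarith

end L

section K
variable {X U : Type*} [MetricSpace X] [CompactSpace X] [MeasurableSpace X] [BorelSpace X]
  [Nonempty X] [MetricSpace U] [CompactSpace U] [MeasurableSpace U] [BorelSpace U]

/-- Equi-Lipschitz predicate for a one-step policy. -/
def LipPol (L : ℝ) (Q : X → ProbabilityMeasure X → ProbabilityMeasure U) : Prop :=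
  ∀ (x x' : X) (μ μ' : ProbabilityMeasure X) (g : U → ℝ),
      LipschitzWith 1 g →
      |∫ u, g u ∂(Q x μ : Measure U) - ∫ u, g u ∂(Q x' μ' : Measure U)|
        ≤ L * (dist x x' + W1 μ μ')

lemma H_bound {h : X × U × ProbabilityMeasure X → ℝ} (hh : Continuous h) {L : ℝ} (hL : 0 < L)
    {ε : ℝ} (hε : 0 < ε) : ∃ C > 0, ∀ Q : X → ProbabilityMeasure X → ProbabilityMeasure U,
      LipPol L Q → ∀ x x' μ μ',
      |∫ u, h (x, u, μ) ∂(Q x μ : Measure U) - ∫ u, h (x', u, μ') ∂(Q x' μ' : Measure U)|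
        ≤ ε + C * (dist x x' + W1 μ μ') := by
  obtain ⟨C, hC, hmod⟩ := modulus (K := X × U × ProbabilityMeasure X) hh
    (ρ := fun z => dist z.1.1 z.2.1 + dist z.1.2.1 z.2.2.1 + W1 z.1.2.2 z.2.2.2)
    (by
      have : Continuous fun z : (X × U × ProbabilityMeasure X) × (X × U × ProbabilityMeasure X) =>
        W1 z.1.2.2 z.2.2.2 := W1_continuous.comp (f := fun z : (X × U × ProbabilityMeasure X) ×
          (X × U × ProbabilityMeasure X) => (z.1.2.2, z.2.2.2)) (by fun_prop)
      fun_prop)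
    (fun z => by
      have := W1_nonneg z.1.2.2 z.2.2.2
      positivity)
    (fun z hz => by
      have h3 := W1_nonneg z.1.2.2 z.2.2.2
      have h1 : 0 ≤ dist z.1.1 z.2.1 := dist_nonneg
      have h2 : 0 ≤ dist z.1.2.1 z.2.2.1 := dist_nonneg
      refine Prod.ext (dist_eq_zero.1 (by linarith)) (Prod.ext (dist_eq_zero.1 (by linarith))
        (W1_eq (by linarith))))
    (ε := ε / 3) (by positivity)
  refine ⟨C * (1 + L), by positivity, fun Q hQ x x' μ μ' => ?_⟩
  have hc : ∀ x μ, Continuous fun u => h (x, u, μ) := fun x μ => by fun_prop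
  have s1 : |∫ u, h (x, u, μ) ∂(Q x μ : Measure U) - ∫ u, h (x', u, μ') ∂(Q x μ : Measure U)|
      ≤ ε / 3 + C * (dist x x' + W1 μ μ') := by
    rw [← integral_sub (integrable_cont _ (hc x μ)) (integrable_cont _ (hc x' μ'))]
    have := norm_integral_le_of_norm_le_const (μ := (Q x μ : Measure U))
      (f := fun u => h (x, u, μ) - h (x', u, μ')) (C := ε / 3 + C * (dist x x' + W1 μ μ'))
      (Eventually.of_forall fun u => by
        have := hmod (x, u, μ) (x', u, μ')
        simpa using this)
    simpa using this
  have s2 : |∫ u, h (x', u, μ') ∂(Q x μ : Measure U) - ∫ u, h (x', u, μ') ∂(Q x' μ' : Measure U)|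
      ≤ 2 * (ε / 3) + C * (L * (dist x x' + W1 μ μ')) := by
    refine affine_int (Q x μ) (Q x' μ') (fun g hg => hQ x x' μ μ' g hg) (hc x' μ') hC
      (fun u v => ?_)
    have := hmod (x', u, μ') (x', v, μ')
    simpa [W1_self] using this
  have := abs_sub_le (∫ u, h (x, u, μ) ∂(Q x μ : Measure U))
    (∫ u, h (x', u, μ') ∂(Q x μ : Measure U)) (∫ u, h (x', u, μ') ∂(Q x' μ' : Measure U))
  linarith

lemma H_cont {h : X × U × ProbabilityMeasure X → ℝ} (hh : Continuous h) {L : ℝ} (hL : 0 < L)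
    {Q : X → ProbabilityMeasure X → ProbabilityMeasure U} (hQ : LipPol L Q) :
    Continuous fun z : X × ProbabilityMeasure X =>
      ∫ u, h (z.1, u, z.2) ∂(Q z.1 z.2 : Measure U) := by
  rw [continuous_iff_continuousAt]
  rintro ⟨x, μ⟩
  rw [ContinuousAt, Metric.tendsto_nhds]
  intro ε hε
  obtain ⟨C, hC, hb⟩ := H_bound hh hL (half_pos hε)
  have hc : Continuous fun z : X × ProbabilityMeasure X => C * (dist z.1 x + W1 z.2 μ) := by
    have : Continuous fun z : X × ProbabilityMeasure X => W1 z.2 μ :=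
      W1_continuous.comp (f := fun z : X × ProbabilityMeasure X => (z.2, μ)) (by fun_prop)
    fun_prop
  have ht := hc.tendsto (x, μ)
  simp only [dist_self, W1_self, add_zero, mul_zero] at ht
  filter_upwards [ht.eventually (gt_mem_nhds (half_pos hε))] with z hz
  rw [Real.dist_eq]
  have := hb Q hQ z.1 x z.2 μ
  linarith

lemma T_bound {h : X × U × ProbabilityMeasure X → ℝ} (hh : Continuous h) {L : ℝ} (hL : 0 < L)
    {ε : ℝ} (hε : 0 < ε) : ∃ C > 0, ∀ Q : X → ProbabilityMeasure X → ProbabilityMeasure U,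
      LipPol L Q → ∀ μ ν : ProbabilityMeasure X,
      |∫ x, ∫ u, h (x, u, μ) ∂(Q x μ : Measure U) ∂(μ : Measure X)
        - ∫ x, ∫ u, h (x, u, ν) ∂(Q x ν : Measure U) ∂(ν : Measure X)|
        ≤ ε + C * W1 μ ν := by
  obtain ⟨C, hC, hb⟩ := H_bound hh hL (ε := ε / 3) (by positivity)
  refine ⟨2 * C, by positivity, fun Q hQ μ ν => ?_⟩
  have hc : ∀ μ, Continuous fun x => ∫ u, h (x, u, μ) ∂(Q x μ : Measure U) := fun μ =>
    (H_cont hh hL hQ).comp (continuous_id.prodMk continuous_const)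
  have s1 : |∫ x, ∫ u, h (x, u, μ) ∂(Q x μ : Measure U) ∂(μ : Measure X)
        - ∫ x, ∫ u, h (x, u, ν) ∂(Q x ν : Measure U) ∂(μ : Measure X)|
      ≤ ε / 3 + C * W1 μ ν := by
    rw [← integral_sub (integrable_cont _ (hc μ)) (integrable_cont _ (hc ν))]
    have := norm_integral_le_of_norm_le_const (μ := (μ : Measure X))
      (f := fun x => ∫ u, h (x, u, μ) ∂(Q x μ : Measure U) - ∫ u, h (x, u, ν) ∂(Q x ν : Measure U))
      (C := ε / 3 + C * W1 μ ν)
      (Eventually.of_forall fun x => by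
        have := hb Q hQ x x μ ν
        simpa using this)
    simpa using this
  have s2 : |∫ x, ∫ u, h (x, u, ν) ∂(Q x ν : Measure U) ∂(μ : Measure X)
        - ∫ x, ∫ u, h (x, u, ν) ∂(Q x ν : Measure U) ∂(ν : Measure X)|
      ≤ 2 * (ε / 3) + C * W1 μ ν := by
    refine affine_int μ ν (fun g hg => le_W1 μ ν g hg) (hc ν) hC (fun x y => ?_)
    have := hb Q hQ x y ν ν
    simpa [W1_self] using this
  have := abs_sub_le (∫ x, ∫ u, h (x, u, μ) ∂(Q x μ : Measure U) ∂(μ : Measure X))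
    (∫ x, ∫ u, h (x, u, ν) ∂(Q x ν : Measure U) ∂(μ : Measure X))
    (∫ x, ∫ u, h (x, u, ν) ∂(Q x ν : Measure U) ∂(ν : Measure X))
  linarith

end K

end MFC

namespace MFC

open Filter Topology ProbabilityTheory

section M
variable {X U : Type*} [MetricSpace X] [CompactSpace X] [MeasurableSpace X] [BorelSpace X]
  [Nonempty X] [MetricSpace U] [CompactSpace U] [MeasurableSpace U] [BorelSpace U]
  {p : X → U → ProbabilityMeasure X → ProbabilityMeasure X}

/-- One-step transition law under a policy. -/
noncomputable def Kern (hp : Continuous fun z : X × U × ProbabilityMeasure X => p z.1 z.2.1 z.2.2)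
    (Q : X → ProbabilityMeasure X → ProbabilityMeasure U) (x : X) (μ : ProbabilityMeasure X) :
    ProbabilityMeasure X :=
  ⟨(Q x μ : Measure U).bind fun u => (p x u μ : Measure X), isProb_bind _
    (κ := fun u => p x u μ)
    (hp.comp (f := fun u => (x, u, μ)) (by fun_prop))⟩

lemma h_cont (hp : Continuous fun z : X × U × ProbabilityMeasure X => p z.1 z.2.1 z.2.2)
    {f : X → ℝ} (hf : Continuous f) :
    Continuous fun z : X × U × ProbabilityMeasure X =>
      ∫ y, f y ∂(p z.1 z.2.1 z.2.2 : Measure X) :=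
  (ProbabilityMeasure.continuous_iff_forall_continuous_integral.1 hp)
    (BoundedContinuousFunction.mkOfCompact ⟨f, hf⟩)

lemma Kern_integral (hp : Continuous fun z : X × U × ProbabilityMeasure X => p z.1 z.2.1 z.2.2)
    (Q : X → ProbabilityMeasure X → ProbabilityMeasure U) (x : X) (μ : ProbabilityMeasure X)
    {f : X → ℝ} (hf : Continuous f) :
    ∫ y, f y ∂(Kern hp Q x μ : Measure X)
      = ∫ u, (fun z : X × U × ProbabilityMeasure X =>
        ∫ y, f y ∂(p z.1 z.2.1 z.2.2 : Measure X)) (x, u, μ) ∂(Q x μ : Measure U) :=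
  integral_bind _ (κ := fun u => p x u μ) (hp.comp (f := fun u => (x, u, μ)) (by fun_prop)) hf

lemma Kern_cont (hp : Continuous fun z : X × U × ProbabilityMeasure X => p z.1 z.2.1 z.2.2)
    {L : ℝ} (hL : 0 < L)
    {Q : X → ProbabilityMeasure X → ProbabilityMeasure U} (hQ : LipPol L Q) :
    Continuous fun z : X × ProbabilityMeasure X => Kern hp Q z.1 z.2 := by
  rw [ProbabilityMeasure.continuous_iff_forall_continuous_integral]
  intro f
  simp_rw [Kern_integral hp Q _ _ f.continuous]
  exact H_cont (h_cont hp f.continuous) hL hQ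

lemma Kern_cont1 (hp : Continuous fun z : X × U × ProbabilityMeasure X => p z.1 z.2.1 z.2.2)
    {L : ℝ} (hL : 0 < L)
    {Q : X → ProbabilityMeasure X → ProbabilityMeasure U} (hQ : LipPol L Q)
    (μ : ProbabilityMeasure X) :
    Continuous fun x => Kern hp Q x μ :=
  (Kern_cont hp hL hQ).comp (f := fun x : X => (x, μ)) (continuous_id.prodMk continuous_const)

/-- `ν` is the mean-field update of `μ`. -/
def IsUpd (hp : Continuous fun z : X × U × ProbabilityMeasure X => p z.1 z.2.1 z.2.2)
    (Q : X → ProbabilityMeasure X → ProbabilityMeasure U) (μ ν : ProbabilityMeasure X) : Prop :=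
  (ν : Measure X) = (μ : Measure X).bind fun x => (Kern hp Q x μ : Measure X)

lemma exists_upd (hp : Continuous fun z : X × U × ProbabilityMeasure X => p z.1 z.2.1 z.2.2)
    {L : ℝ} (hL : 0 < L)
    {Q : X → ProbabilityMeasure X → ProbabilityMeasure U} (hQ : LipPol L Q)
    (μ : ProbabilityMeasure X) : ∃ ν, IsUpd hp Q μ ν :=
  ⟨⟨_, isProb_bind (μ : Measure X) (Kern_cont1 hp hL hQ μ)⟩, rfl⟩

lemma upd_integral (hp : Continuous fun z : X × U × ProbabilityMeasure X => p z.1 z.2.1 z.2.2)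
    {L : ℝ} (hL : 0 < L)
    {Q : X → ProbabilityMeasure X → ProbabilityMeasure U} (hQ : LipPol L Q)
    {μ ν : ProbabilityMeasure X} (h : IsUpd hp Q μ ν) {f : X → ℝ} (hf : Continuous f) :
    ∫ x, f x ∂(ν : Measure X)
      = ∫ x, ∫ y, f y ∂(Kern hp Q x μ : Measure X) ∂(μ : Measure X) := by
  rw [h]
  exact integral_bind _ (Kern_cont1 hp hL hQ μ) hf

lemma T_W (hp : Continuous fun z : X × U × ProbabilityMeasure X => p z.1 z.2.1 z.2.2)
    {L : ℝ} (hL : 0 < L) {ε : ℝ} (hε : 0 < ε) :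
    ∃ C > 0, ∀ Q : X → ProbabilityMeasure X → ProbabilityMeasure U, LipPol L Q →
      ∀ μ μ' ν ν', IsUpd hp Q μ μ' → IsUpd hp Q ν ν' → W1 μ' ν' ≤ ε + C * W1 μ ν := by
  obtain ⟨F, hF⟩ := W1_bound (X := X) (half_pos hε)
  have hη : 0 < ε / (2 * (F.card + 1)) := by positivity
  choose C hC hb using fun g : BoundedContinuousFunction X ℝ =>
    T_bound (h_cont hp g.continuous) hL hη
  refine ⟨∑ g ∈ F, C g + 1, by
    have := Finset.sum_nonneg (s := F) fun g _ => (hC g).le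
    linarith, fun Q hQ μ μ' ν ν' h1 h2 => ?_⟩
  refine (hF μ' ν').trans ?_
  have hs : ∑ g ∈ F, |∫ x, g x ∂(μ' : Measure X) - ∫ x, g x ∂(ν' : Measure X)|
      ≤ ∑ g ∈ F, (ε / (2 * (F.card + 1)) + C g * W1 μ ν) := by
    refine Finset.sum_le_sum fun g _ => ?_
    rw [upd_integral hp hL hQ h1 g.continuous, upd_integral hp hL hQ h2 g.continuous]
    simp_rw [Kern_integral hp Q _ _ g.continuous]
    exact hb g Q hQ μ ν
  rw [Finset.sum_add_distrib, Finset.sum_const, nsmul_eq_mul, ← Finset.sum_mul] at hs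
  have h3 : (F.card : ℝ) * (ε / (2 * (F.card + 1))) ≤ ε / 2 := by
    rw [mul_div_assoc', div_le_div_iff₀ (by positivity) (by positivity)]
    nlinarith
  have := W1_nonneg μ ν
  linarith

/-- Joint one-step kernel of the `N`-agent system. -/
noncomputable def JK (hp : Continuous fun z : X × U × ProbabilityMeasure X => p z.1 z.2.1 z.2.2)
    (Q : X → ProbabilityMeasure X → ProbabilityMeasure U) (N : ℕ) (x : Fin N → X) :
    ProbabilityMeasure (Fin N → X) :=
  ProbabilityMeasure.pi fun i => Kern hp Q (x i) (emp N x)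

lemma JK_cont (hp : Continuous fun z : X × U × ProbabilityMeasure X => p z.1 z.2.1 z.2.2)
    {L : ℝ} (hL : 0 < L)
    {Q : X → ProbabilityMeasure X → ProbabilityMeasure U} (hQ : LipPol L Q) (N : ℕ) :
    Continuous fun x : Fin N → X => JK hp Q N x := by
  refine ProbabilityMeasure.continuous_pi.comp (continuous_pi fun i => ?_)
  exact (Kern_cont hp hL hQ).comp (f := fun x : Fin N → X => (x i, emp N x)) ((continuous_apply i).prodMk (emp_continuous N))

lemma law_succ (hp : Continuous fun z : X × U × ProbabilityMeasure X => p z.1 z.2.1 z.2.2)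
    (q : ℕ → X → ProbabilityMeasure X → ProbabilityMeasure U) (μ0 : ProbabilityMeasure X)
    (N t : ℕ) : mfcLawN p q μ0 N (t + 1)
      = (mfcLawN p q μ0 N t).bind fun x => (JK hp (q t) N x : Measure (Fin N → X)) := rfl

lemma law_prob (hp : Continuous fun z : X × U × ProbabilityMeasure X => p z.1 z.2.1 z.2.2)
    {L : ℝ} (hL : 0 < L) {q : ℕ → X → ProbabilityMeasure X → ProbabilityMeasure U}
    (hq : ∀ t, LipPol L (q t)) (μ0 : ProbabilityMeasure X) (N t : ℕ) :
    IsProbabilityMeasure (mfcLawN p q μ0 N t) := by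
  induction t with
  | zero => unfold mfcLawN; infer_instance
  | succ t ih =>
    rw [law_succ hp]
    exact isProb_bind _ (JK_cont hp hL (hq t) N)

lemma main_W (hp : Continuous fun z : X × U × ProbabilityMeasure X => p z.1 z.2.1 z.2.2)
    {L : ℝ} (hL : 0 < L) (Pi : Set (ℕ → X → ProbabilityMeasure X → ProbabilityMeasure U))
    (hPi : ∀ q ∈ Pi, ∀ t, LipPol L (q t)) (μ0 : ProbabilityMeasure X)
    (mf : (ℕ → X → ProbabilityMeasure X → ProbabilityMeasure U) → ℕ → ProbabilityMeasure X)
    (hmf0 : ∀ q, mf q 0 = μ0)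
    (hmf : ∀ q ∈ Pi, ∀ t, IsUpd hp (q t) (mf q t) (mf q (t + 1))) (t : ℕ) :
    ∀ ε > 0, ∃ N0 : ℕ, ∀ N ≥ N0, ∀ q ∈ Pi,
      ∫ x, W1 (emp N x) (mf q t) ∂(mfcLawN p q μ0 N t) ≤ ε := by
  have hcW : ∀ (N : ℕ) (ν : ProbabilityMeasure X),
      Continuous fun y : Fin N → X => W1 (emp N y) ν := fun N ν =>
    W1_continuous.comp ((emp_continuous N).prodMk continuous_const)
  induction t with
  | zero =>
    intro ε hε
    obtain ⟨N0, hN0, h⟩ := lln_W (X := X) hε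
    refine ⟨N0, fun N hN q _ => ?_⟩
    rw [hmf0]
    refine h N hN (fun _ => μ0) μ0 fun f _ => ?_
    have : (N : ℝ) ≠ 0 := by
      have : N ≠ 0 := by omega
      exact_mod_cast this
    simp [this]
  | succ t ih =>
    intro ε hε
    obtain ⟨N1, hN1, hlln⟩ := lln_W (X := X) (ε := ε / 3) (by positivity)
    obtain ⟨C, hC, hT⟩ := T_W hp hL (ε := ε / 3) (by positivity)
    obtain ⟨N2, h2⟩ := ih (ε / 3 / C) (by positivity)
    refine ⟨max N1 N2, fun N hN q hq => ?_⟩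
    have hNp : 0 < N := lt_of_lt_of_le hN1 ((le_max_left _ _).trans hN)
    have hl1 := hlln N ((le_max_left _ _).trans hN)
    have hl2 := h2 N ((le_max_right _ _).trans hN) q hq
    have hQ := hPi q hq t
    have := law_prob hp hL (hPi q hq) μ0 N t
    rw [law_succ hp, integral_bind _ (JK_cont hp hL hQ N) (hcW N _)]
    have hpt : ∀ x : Fin N → X,
        ∫ y, W1 (emp N y) (mf q (t + 1)) ∂(JK hp (q t) N x : Measure (Fin N → X))
          ≤ ε / 3 + (ε / 3 + C * W1 (emp N x) (mf q t)) := by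
      intro x
      obtain ⟨ν, hν⟩ := exists_upd hp hL hQ (emp N x)
      have e1 : ∫ y, W1 (emp N y) ν ∂(JK hp (q t) N x : Measure (Fin N → X)) ≤ ε / 3 := by
        refine hl1 (fun i => Kern hp (q t) (x i) (emp N x)) ν fun f hf => ?_
        rw [upd_integral hp hL hQ hν hf, integral_emp hNp]
        exact (ProbabilityMeasure.continuous_iff_forall_continuous_integral.1
          (Kern_cont1 hp hL hQ (emp N x))) (BoundedContinuousFunction.mkOfCompact ⟨f, hf⟩)
      have e2 := hT (q t) hQ _ _ _ _ hν (hmf q hq t)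
      calc _ ≤ ∫ y, (W1 (emp N y) ν + W1 ν (mf q (t + 1)))
              ∂(JK hp (q t) N x : Measure (Fin N → X)) :=
            integral_mono (integrable_cont _ (hcW N _))
              ((integrable_cont _ (hcW N _)).add (integrable_const _))
              fun y => W1_triangle _ _ _
        _ = ∫ y, W1 (emp N y) ν ∂(JK hp (q t) N x : Measure (Fin N → X))
              + W1 ν (mf q (t + 1)) := by
            rw [integral_add (integrable_cont _ (hcW N _)) (integrable_const _)]; simp
        _ ≤ _ := add_le_add e1 e2
    have hcl : Continuous fun x : Fin N → X =>
        ∫ y, W1 (emp N y) (mf q (t + 1)) ∂(JK hp (q t) N x : Measure (Fin N → X)) :=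
      (ProbabilityMeasure.continuous_iff_forall_continuous_integral.1
          (JK_cont hp hL hQ N)) (BoundedContinuousFunction.mkOfCompact ⟨_, hcW N _⟩)
    have hi := integrable_cont (mfcLawN p q μ0 N t) (hcW N (mf q t))
    calc _ ≤ ∫ x, (ε / 3 + (ε / 3 + C * W1 (emp N x) (mf q t))) ∂(mfcLawN p q μ0 N t) :=
          integral_mono (integrable_cont _ hcl)
            ((integrable_const _).add ((integrable_const _).add (hi.const_mul C))) hpt
      _ = ε / 3 + (ε / 3 + C * ∫ x, W1 (emp N x) (mf q t) ∂(mfcLawN p q μ0 N t)) := by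
          have hi2 : Integrable (fun x => ε / 3 + C * W1 (emp N x) (mf q t))
              (mfcLawN p q μ0 N t) := (integrable_const _).add (hi.const_mul C)
          rw [integral_add (integrable_const _) hi2,
            integral_add (integrable_const _) (hi.const_mul C), integral_const_mul]
          simp
      _ ≤ ε / 3 + (ε / 3 + C * (ε / 3 / C)) := by gcongr
      _ = ε := by field_simp; ring

end M

end MFC

/-- uniform convergence of objectives for deterministic MFC. With compact
`𝒳`, `𝒰`, continuous `p` and `r`, `γ ∈ (0,1)`, and an equi-Lipschitz policy class `Π`, the
`N`-agent objective `J^N(π) = E[Σ_t γ^t r(μ_t^N)]` converges to the limiting MFC objective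
`J(Φ⁻¹(π)) = Σ_t γ^t r(μ_t)`, uniformly over `π ∈ Π`. -/
theorem statement11 {X U : Type*}
    [MetricSpace X] [CompactSpace X] [MeasurableSpace X] [BorelSpace X] [Nonempty X]
    [MetricSpace U] [CompactSpace U] [MeasurableSpace U] [BorelSpace U]
    (p : X → U → ProbabilityMeasure X → ProbabilityMeasure X)
    (hp : Continuous fun z : X × U × ProbabilityMeasure X => p z.1 z.2.1 z.2.2)
    (r : ProbabilityMeasure X → ℝ) (hr : Continuous r)
    (γ : ℝ) (hγ0 : 0 < γ) (hγ1 : γ < 1)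
    (L : ℝ) (hL : 0 < L)
    (Pi : Set (ℕ → X → ProbabilityMeasure X → ProbabilityMeasure U))
    (hPi : ∀ π ∈ Pi, ∀ (t : ℕ) (x x' : X) (μ μ' : ProbabilityMeasure X) (g : U → ℝ),
      LipschitzWith 1 g →
      |∫ u, g u ∂(π t x μ : Measure U) - ∫ u, g u ∂(π t x' μ' : Measure U)|
        ≤ L * (dist x x' + W1 μ μ'))
    (μ0 : ProbabilityMeasure X)
    (mf : (ℕ → X → ProbabilityMeasure X → ProbabilityMeasure U) → ℕ → ProbabilityMeasure X)
    (hmf0 : ∀ q, mf q 0 = μ0)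
    (hmf : ∀ q ∈ Pi, ∀ t : ℕ,
      (mf q (t + 1) : Measure X) = (mf q t : Measure X).bind fun x =>
        ((q t x (mf q t) : Measure U)).bind fun u => (p x u (mf q t) : Measure X)) :
    ∀ ε > (0 : ℝ), ∃ N0 : ℕ, ∀ N ≥ N0, ∀ q ∈ Pi,
      |(∑' t : ℕ, γ ^ t * ∫ x, r (emp N x) ∂(mfcLawN p q μ0 N t))
        - ∑' t : ℕ, γ ^ t * r (mf q t)| ≤ ε := by

  classical
  have hQ : ∀ q ∈ Pi, ∀ t, MFC.LipPol L (q t) := fun q hq t => hPi q hq t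
  have hW := MFC.main_W hp hL Pi hQ μ0 mf hmf0 (fun q hq t => hmf q hq t)
  obtain ⟨R, hR⟩ := (isCompact_univ (X := ProbabilityMeasure X)).exists_bound_of_continuousOn
    hr.continuousOn
  have hR' : ∀ μ, |r μ| ≤ R := fun μ => hR μ trivial
  have hrc : ∀ N : ℕ, Continuous fun x : Fin N → X => r (emp N x) := fun N =>
    hr.comp (MFC.emp_continuous N)
  have hbd : ∀ q ∈ Pi, ∀ N t, |∫ x, r (emp N x) ∂(mfcLawN p q μ0 N t)| ≤ R := by
    intro q hq N t
    have := MFC.law_prob hp hL (hQ q hq) μ0 N t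
    have := norm_integral_le_of_norm_le_const (μ := mfcLawN p q μ0 N t)
      (f := fun x => r (emp N x)) (C := R) (Filter.Eventually.of_forall fun x => hR' _)
    simpa using this
  have hpt : ∀ t : ℕ, ∀ ε > (0 : ℝ), ∃ N0 : ℕ, ∀ N ≥ N0, ∀ q ∈ Pi,
      |∫ x, r (emp N x) ∂(mfcLawN p q μ0 N t) - r (mf q t)| ≤ ε := by
    intro t ε hε
    obtain ⟨C, hC, hmod⟩ := MFC.modulus hr (ρ := fun z => W1 z.1 z.2) MFC.W1_continuous
      (fun z => MFC.W1_nonneg _ _) (fun z hz => MFC.W1_eq hz) (half_pos hε)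
    obtain ⟨N0, hN0⟩ := hW t (ε / 2 / C) (by positivity)
    refine ⟨N0, fun N hN q hq => ?_⟩
    have := MFC.law_prob hp hL (hQ q hq) μ0 N t
    have hi := MFC.integrable_cont (mfcLawN p q μ0 N t) (MFC.W1_continuous.comp
      ((MFC.emp_continuous N).prodMk (continuous_const (y := mf q t))))
    have hi : Integrable (fun x => W1 (emp N x) (mf q t)) (mfcLawN p q μ0 N t) := hi
    have hir := MFC.integrable_cont (mfcLawN p q μ0 N t) (hrc N)
    have e : ∫ x, r (emp N x) ∂(mfcLawN p q μ0 N t) - r (mf q t)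
        = ∫ x, (r (emp N x) - r (mf q t)) ∂(mfcLawN p q μ0 N t) := by
      rw [integral_sub hir (integrable_const _)]; simp
    rw [e]
    calc _ ≤ ∫ x, |r (emp N x) - r (mf q t)| ∂(mfcLawN p q μ0 N t) := abs_integral_le_integral_abs
      _ ≤ ∫ x, (ε / 2 + C * W1 (emp N x) (mf q t)) ∂(mfcLawN p q μ0 N t) :=
          integral_mono (hir.sub (integrable_const _)).abs ((integrable_const _).add (hi.const_mul C))
            fun x => hmod _ _
      _ = ε / 2 + C * ∫ x, W1 (emp N x) (mf q t) ∂(mfcLawN p q μ0 N t) := by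
          rw [integral_add (integrable_const _) (hi.const_mul C), integral_const_mul]
          simp
      _ ≤ ε / 2 + C * (ε / 2 / C) := by
          gcongr
          exact hN0 N hN q hq
      _ = ε := by field_simp; ring
  have hgeo : Summable fun t : ℕ => γ ^ t * R :=
    (summable_geometric_of_lt_one hγ0.le hγ1).mul_right R
  by_contra hcon
  push Not at hcon
  obtain ⟨ε, hε, hcon⟩ := hcon
  choose N hN q hq hbig using hcon
  have hs1 : ∀ n, Summable fun t : ℕ =>
      γ ^ t * ∫ x, r (emp (N n) x) ∂(mfcLawN p (q n) μ0 (N n) t) := fun n =>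
    Summable.of_norm_bounded hgeo fun t => by
      rw [norm_mul, norm_pow, Real.norm_of_nonneg hγ0.le]
      gcongr
      exact hbd _ (hq n) _ _
  have hs2 : ∀ n, Summable fun t : ℕ => γ ^ t * r (mf (q n) t) := fun n =>
    Summable.of_norm_bounded hgeo fun t => by
      rw [norm_mul, norm_pow, Real.norm_of_nonneg hγ0.le]
      gcongr
      exact hR' _
  have hlim := tendsto_tsum_of_dominated_convergence (𝓕 := Filter.atTop)
    (f := fun (n : ℕ) (t : ℕ) => γ ^ t * ∫ x, r (emp (N n) x) ∂(mfcLawN p (q n) μ0 (N n) t)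
      - γ ^ t * r (mf (q n) t)) (g := fun _ => (0 : ℝ)) (hgeo.mul_left 2)
    (by
      intro t
      have h0 : Filter.Tendsto (fun n => ∫ x, r (emp (N n) x) ∂(mfcLawN p (q n) μ0 (N n) t)
          - r (mf (q n) t)) Filter.atTop (nhds 0) := by
        rw [Metric.tendsto_atTop]
        intro δ hδ
        obtain ⟨N0, h0⟩ := hpt t (δ / 2) (half_pos hδ)
        refine ⟨N0, fun n hn => ?_⟩
        rw [Real.dist_eq, sub_zero]
        have := h0 (N n) (le_trans hn (hN n)) (q n) (hq n)
        linarith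
      have := h0.const_mul (γ ^ t)
      simpa [mul_sub] using this)
    (Filter.Eventually.of_forall fun n t => by
      rw [← mul_sub, norm_mul, norm_pow, Real.norm_of_nonneg hγ0.le, mul_left_comm]
      gcongr
      have a := abs_le.1 (hbd _ (hq n) (N n) t)
      have b := abs_le.1 (hR' (mf (q n) t))
      rw [Real.norm_eq_abs, abs_le]
      constructor <;> linarith [a.1, a.2, b.1, b.2])
  rw [tsum_zero] at hlim
  obtain ⟨n0, hn0⟩ := Metric.tendsto_atTop.1 hlim ε hε
  have h1 := hn0 n0 le_rfl
  rw [Real.dist_eq, sub_zero, (hs1 n0).tsum_sub (hs2 n0)] at h1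
  exact absurd (hbig n0) (not_lt.2 h1.le)
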